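/- For every integer n ≥ 5, there exists a Steiner triple system Σ = (X, B) of order v = 2^n − 7 together with a bicoloring of Σ with exactly n − 1 color classes in which one of the color classes is a maximal independent set of Σ of cardinality (v − 1)/2. -/

import Mathlib

/-!
The points are `0` (playing the role of a point at infinity) and the integers in `[8, 2 ^ n)`.
The nonzero points are cut into groups of eight `{8u, …, 8u + 7}`, `u ≥ 1`.

* Two nonzero points `x`, `y` in different groups lie in the block `{x, y, x ^^^ y}` of the binary
  projective space.
* Each group together with `0` carries the Steiner triple system of order 9 with residue blocks
  `{q, q + 1, q + 3}` and `{∞, q, q + 4}` for `q` in `ℤ/8`.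

All odd points form one class `T`; the even nonzero points are coloured by the position of their
leading binary digit, and `0` is a class of its own. This gives the classes `{0}`, `T` and one class
for each leading digit `3, …, n - 1`. The number of odd points in a block is `0` or `2` for the xor
blocks. If it is `0`, exactly two of the three points of an xor block share their leading digit.
In the order 9 systems two of the three points always have the same parity and leading digit.
Finally an even point `s` is in a block with two points of `T`, so `T` is maximal independent.

The block system is handled through the binary operation `third`, sending two distinct points to
the third point of their block; `isSTS_of_third` and `isBicoloring_of_col` turn
pointwise properties of this operation and of the colour function into the required structure.
-/

/-- A Steiner triple system: `B` is a family of 3-element subsets of `X` such that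
every 2-element subset of `X` is contained in exactly one member of `B`. -/
def IsSTS {α : Type*} [DecidableEq α] (X : Finset α) (B : Finset (Finset α)) : Prop :=
  (∀ b ∈ B, b ⊆ X ∧ b.card = 3) ∧
    ∀ p : Finset α, p ⊆ X → p.card = 2 → ∃! b, b ∈ B ∧ p ⊆ b

/-- An independent set of an STS: a subset of the points containing no block. -/
def IsIndepSet {α : Type*} [DecidableEq α] (X : Finset α) (B : Finset (Finset α))
    (T : Finset α) : Prop :=
  T ⊆ X ∧ ∀ b ∈ B, ¬ b ⊆ T

/-- A maximal independent set: an independent set not properly contained in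
another independent set. -/
def IsMaxIndepSet {α : Type*} [DecidableEq α] (X : Finset α) (B : Finset (Finset α))
    (T : Finset α) : Prop :=
  IsIndepSet X B T ∧ ∀ T' : Finset α, IsIndepSet X B T' → T ⊆ T' → T' = T

/-- A bicoloring of an STS `(X, B)` with exactly `k` colors: a partition of `X` into
`k` nonempty color classes such that every block of `B` meets exactly two classes. -/
def IsBicoloring {α : Type*} [DecidableEq α] (X : Finset α) (B : Finset (Finset α))
    (C : Finset (Finset α)) (k : ℕ) : Prop :=
  C.card = k ∧ (∀ c ∈ C, c.Nonempty) ∧ (∀ c ∈ C, c ⊆ X) ∧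
    (∀ x ∈ X, ∃! c, c ∈ C ∧ x ∈ c) ∧
    ∀ b ∈ B, (C.filter fun c => (b ∩ c).Nonempty).card = 2

/-! ### Triple systems and colourings from functions -/

/-- The triples `{x, y, f x y}` for distinct `x`, `y` in `X`. -/
def triples (X : Finset ℕ) (f : ℕ → ℕ → ℕ) : Finset (Finset ℕ) :=
  X.offDiag.image fun p => {p.1, p.2, f p.1 p.2}

lemma mem_triples {X : Finset ℕ} {f : ℕ → ℕ → ℕ} {b : Finset ℕ} :
    b ∈ triples X f ↔ ∃ x ∈ X, ∃ y ∈ X, x ≠ y ∧ b = {x, y, f x y} := by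
  simp only [triples, Finset.mem_image, Finset.mem_offDiag, Prod.exists]
  constructor
  · rintro ⟨x, y, ⟨hx, hy, hxy⟩, rfl⟩
    exact ⟨x, hx, y, hy, hxy, rfl⟩
  · rintro ⟨x, hx, y, hy, hxy, rfl⟩
    exact ⟨x, y, ⟨hx, hy, hxy⟩, rfl⟩

/-- A commutative operation with `f x (f x y) = y` producing a new point from any two distinct
points (a Steiner quasigroup without its diagonal) defines a Steiner triple system. -/
lemma isSTS_of_third (X : Finset ℕ) (f : ℕ → ℕ → ℕ)
    (hmem : ∀ x ∈ X, ∀ y ∈ X, x ≠ y → f x y ∈ X)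
    (hne : ∀ x ∈ X, ∀ y ∈ X, x ≠ y → f x y ≠ x)
    (hcomm : ∀ x ∈ X, ∀ y ∈ X, x ≠ y → f x y = f y x)
    (hinv : ∀ x ∈ X, ∀ y ∈ X, x ≠ y → f x (f x y) = y) :
    IsSTS X (triples X f) := by
  have hne' : ∀ x ∈ X, ∀ y ∈ X, x ≠ y → f x y ≠ y := fun x hx y hy h => by
    rw [hcomm x hx y hy h]; exact hne y hy x hx h.symm
  refine ⟨?_, ?_⟩
  · intro b hb
    obtain ⟨x, hx, y, hy, hxy, rfl⟩ := mem_triples.1 hb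
    refine ⟨?_, ?_⟩
    · intro z hz
      simp only [Finset.mem_insert, Finset.mem_singleton] at hz
      rcases hz with rfl | rfl | rfl
      exacts [hx, hy, hmem x hx y hy hxy]
    · exact Finset.card_eq_three.2
        ⟨x, y, _, hxy, (hne x hx y hy hxy).symm, (hne' x hx y hy hxy).symm, rfl⟩
  · intro p hp hp2
    obtain ⟨x, y, hxy, rfl⟩ := Finset.card_eq_two.1 hp2
    have hx : x ∈ X := hp (by simp)
    have hy : y ∈ X := hp (by simp)
    refine ⟨{x, y, f x y}, ⟨mem_triples.2 ⟨x, hx, y, hy, hxy, rfl⟩, ?_⟩, ?_⟩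
    · intro z hz
      simp only [Finset.mem_insert, Finset.mem_singleton] at hz ⊢
      tauto
    · rintro b ⟨hb, hpb⟩
      obtain ⟨u, hu, w, hw, huw, rfl⟩ := mem_triples.1 hb
      have hxb : x ∈ ({u, w, f u w} : Finset ℕ) := hpb (by simp)
      have hyb : y ∈ ({u, w, f u w} : Finset ℕ) := hpb (by simp)
      have c := hcomm u hu w hw huw
      have i1 := hinv u hu w hw huw
      have i2 := hinv w hw u hu huw.symm
      have m := hmem u hu w hw huw
      have n1 := hne u hu w hw huw
      have n2 := hne' u hu w hw huw
      have c1 := hcomm u hu _ m n1.symm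
      have c2 := hcomm w hw _ m n2.symm
      rw [← c] at i2
      simp only [Finset.mem_insert, Finset.mem_singleton] at hxb hyb
      rcases hxb with rfl | rfl | rfl <;> rcases hyb with rfl | rfl | rfl <;>
        first
        | exact absurd rfl hxy
        | (ext z; simp only [Finset.mem_insert, Finset.mem_singleton] <;> grind)

/-- The colour classes of the points of `X` under the colour function `col`. -/
def classes (X : Finset ℕ) (col : ℕ → ℕ) : Finset (Finset ℕ) :=
  (X.image col).image fun k => X.filter fun x => col x = k

lemma classes_injOn (X : Finset ℕ) (col : ℕ → ℕ) :
    Set.InjOn (fun k => X.filter fun x => col x = k) (X.image col : Finset ℕ) := by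
  intro k hk l _ h
  obtain ⟨x, hx, rfl⟩ := Finset.mem_image.1 (Finset.mem_coe.1 hk)
  have : x ∈ X.filter fun y => col y = col x := by simp [hx]
  simp only at h
  rw [h] at this
  exact (Finset.mem_filter.1 this).2

lemma isBicoloring_of_col (X : Finset ℕ) (B : Finset (Finset ℕ)) (col : ℕ → ℕ) (k : ℕ)
    (hk : (X.image col).card = k) (hBX : ∀ b ∈ B, b ⊆ X)
    (hB : ∀ b ∈ B, (b.image col).card = 2) :
    IsBicoloring X B (classes X col) k := by
  refine ⟨?_, ?_, ?_, ?_, ?_⟩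
  · rw [classes, Finset.card_image_of_injOn (classes_injOn X col), hk]
  · intro c hc
    obtain ⟨l, hl, rfl⟩ := Finset.mem_image.1 hc
    obtain ⟨x, hx, rfl⟩ := Finset.mem_image.1 hl
    exact ⟨x, by simp [hx]⟩
  · intro c hc
    obtain ⟨l, hl, rfl⟩ := Finset.mem_image.1 hc
    exact Finset.filter_subset _ _
  · intro x hx
    refine ⟨X.filter fun y => col y = col x,
      ⟨Finset.mem_image_of_mem _ (Finset.mem_image_of_mem _ hx), by simp [hx]⟩, ?_⟩
    rintro c ⟨hc, hxc⟩
    obtain ⟨l, hl, rfl⟩ := Finset.mem_image.1 hc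
    rw [(Finset.mem_filter.1 hxc).2]
  · intro b hb
    have : (classes X col).filter (fun c => (b ∩ c).Nonempty) =
        (b.image col).image fun k => X.filter fun x => col x = k := by
      ext c
      simp only [Finset.mem_filter, classes, Finset.mem_image]
      constructor
      · rintro ⟨⟨l, hl, rfl⟩, x, hx⟩
        simp only [Finset.mem_inter, Finset.mem_filter] at hx
        exact ⟨l, ⟨x, hx.1, hx.2.2⟩, rfl⟩
      · rintro ⟨l, ⟨x, hx, rfl⟩, rfl⟩
        exact ⟨⟨_, ⟨x, hBX b hb hx, rfl⟩, rfl⟩, x, by simp [hx, hBX b hb hx]⟩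
    rw [this, Finset.card_image_of_injOn, hB b hb]
    exact (classes_injOn X col).mono
      (Finset.coe_subset.2 (Finset.image_subset_image (hBX b hb)))

/-! ### The concrete system -/

/-- The third residue of the block `{q, q + 1, q + 3}` modulo 8 through `a` and `b`, for residues
`a`, `b` whose difference is neither `0` nor `4`. -/
def resThird (a b : ℕ) : ℕ :=
  (a + [0, 3, 7, 1, 0, 6, 5, 2].getD ((b + 8 - a) % 8) 0) % 8

lemma resThird_spec : ∀ a < 8, ∀ b < 8, a ≠ b → b ≠ (a + 4) % 8 →
    resThird a b < 8 ∧ resThird a b ≠ a ∧ resThird a b ≠ (a + 4) % 8 ∧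
    resThird a b = resThird b a ∧ resThird a (resThird a b) = b ∧
    ¬ (a % 2 = b % 2 ∧ resThird a b % 2 = a % 2) := by
  have key : ∀ a b : Fin 8, a ≠ b → b.1 ≠ (a.1 + 4) % 8 →
      resThird a b < 8 ∧ resThird a b ≠ a ∧ resThird a b ≠ (a + 4) % 8 ∧
      resThird a b = resThird b a ∧ resThird a (resThird a b) = b ∧
      ¬ (a.1 % 2 = b.1 % 2 ∧ resThird a b % 2 = a.1 % 2) := by
    decide
  intro a ha b hb hab hab4
  exact key ⟨a, ha⟩ ⟨b, hb⟩ (by simpa using hab) hab4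

/-- The third point of the block through the distinct points `x` and `y`. -/
def third (x y : ℕ) : ℕ :=
  if x = 0 then 8 * (y / 8) + (y % 8 + 4) % 8
  else if y = 0 then 8 * (x / 8) + (x % 8 + 4) % 8
  else if x / 8 = y / 8 then
    if y % 8 = (x % 8 + 4) % 8 then 0 else 8 * (x / 8) + resThird (x % 8) (y % 8)
  else x ^^^ y

/-- The colour of a point: `1` for odd points, and the exponent of the leading binary digit for
even points. With the convention `Nat.log 2 0 = 0` the point `0` has its own colour. -/
def col (x : ℕ) : ℕ := if x % 2 = 1 then 1 else Nat.log 2 x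

/-- The point set `{0} ∪ [8, 2 ^ n)`. -/
def points (n : ℕ) : Finset ℕ := insert 0 (Finset.Ico 8 (2 ^ n))

lemma mem_points {n x : ℕ} : x ∈ points n ↔ x = 0 ∨ 8 ≤ x ∧ x < 2 ^ n := by
  simp [points]

lemma xor_xor_left (x y : ℕ) : x ^^^ (x ^^^ y) = y := by
  rw [← Nat.xor_assoc, Nat.xor_self, Nat.zero_xor]

lemma xor_div_eight (x y : ℕ) : (x ^^^ y) / 8 = x / 8 ^^^ y / 8 :=
  Nat.xor_div_two_pow (n := 3)

lemma eight_le_xor {x y : ℕ} (h : x / 8 ≠ y / 8) : 8 ≤ x ^^^ y := by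
  by_contra hlt
  have h0 : (x ^^^ y) / 8 = 0 := by omega
  rw [xor_div_eight, Nat.xor_eq_zero_iff] at h0
  exact h h0

lemma third_mem {n x y : ℕ} (hn : 5 ≤ n) (hx : x ∈ points n) (hy : y ∈ points n) (hxy : x ≠ y) :
    third x y ∈ points n := by
  -- `2 ^ n` is a multiple of 8, so a group meeting `[8, 2 ^ n)` is contained in it.
  obtain ⟨N, hN⟩ : ∃ N, 2 ^ n = 8 * N := ⟨2 ^ (n - 3), by
    rw [show (8 : ℕ) = 2 ^ 3 by norm_num, ← pow_add]; congr 1; omega⟩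
  rw [mem_points] at *
  unfold third
  have hr := resThird_spec (x % 8) (Nat.mod_lt _ (by norm_num)) (y % 8) (Nat.mod_lt _ (by norm_num))
  split_ifs with h1 h2 h3 h4
  · omega
  · omega
  · exact Or.inl rfl
  · have := (hr (by omega) h4).1
    omega
  · refine Or.inr ⟨eight_le_xor h3, Nat.xor_lt_two_pow ?_ ?_⟩ <;> omega

lemma third_ne {n x y : ℕ} (hy : y ∈ points n) (hxy : x ≠ y) :
    third x y ≠ x := by
  rw [mem_points] at hy
  unfold third
  have hr := resThird_spec (x % 8) (Nat.mod_lt _ (by norm_num)) (y % 8) (Nat.mod_lt _ (by norm_num))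
  split_ifs with h1 h2 h3 h4
  · omega
  · omega
  · omega
  · have := hr (by omega) h4
    omega
  · intro h
    have h' : x ^^^ (x ^^^ y) = x ^^^ x := by rw [h]
    rw [xor_xor_left, Nat.xor_self] at h'
    exact h2 h'

lemma third_comm {x y : ℕ} (hxy : x ≠ y) :
    third x y = third y x := by
  unfold third
  have hr := resThird_spec (x % 8) (Nat.mod_lt _ (by norm_num)) (y % 8) (Nat.mod_lt _ (by norm_num))
  split_ifs
  all_goals first
    | omega
    | exact Nat.xor_comm x y

lemma third_third {n x y : ℕ} (hy : y ∈ points n) (hxy : x ≠ y) :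
    third x (third x y) = y := by
  rw [mem_points] at hy
  have hr := resThird_spec (x % 8) (Nat.mod_lt _ (by norm_num)) (y % 8) (Nat.mod_lt _ (by norm_num))
  by_cases h1 : x = 0
  · simp only [third, h1, if_true]
    omega
  by_cases h2 : y = 0
  · simp only [third, h1, h2, if_true, if_false]
    split_ifs <;> omega
  by_cases h3 : x / 8 = y / 8
  · by_cases h4 : y % 8 = (x % 8 + 4) % 8
    · simp only [third, h1, h2, h3, h4, if_true, if_false]
      omega
    · obtain ⟨r1, r2, r3, -, r5, -⟩ := hr (by omega) h4
      have e : third x y = 8 * (x / 8) + resThird (x % 8) (y % 8) := by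
        simp only [third, if_neg h1, if_neg h2, if_pos h3, if_neg h4]
      rw [e]
      have d : (8 * (x / 8) + resThird (x % 8) (y % 8)) / 8 = x / 8 := by omega
      have m : (8 * (x / 8) + resThird (x % 8) (y % 8)) % 8 = resThird (x % 8) (y % 8) := by omega
      have z : 8 * (x / 8) + resThird (x % 8) (y % 8) ≠ 0 := by omega
      rw [third, if_neg h1, if_neg z, d, if_pos rfl, m, if_neg r3, r5]
      omega
  · have e : third x y = x ^^^ y := by
      simp only [third, if_neg h1, if_neg h2, if_neg h3]
    have h8 := eight_le_xor h3
    have d : ¬ x / 8 = (x ^^^ y) / 8 := by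
      rw [xor_div_eight]
      intro h
      have h' : x / 8 ^^^ x / 8 = x / 8 ^^^ (x / 8 ^^^ y / 8) := by rw [← h]
      rw [xor_xor_left, Nat.xor_self] at h'
      omega
    rw [e, third, if_neg h1, if_neg (by omega), if_neg d, xor_xor_left]

/-! ### The colouring -/

/-- Points of the same parity in the same group have the same colour. -/
lemma col_eq_of_div_eq {x y : ℕ} (h8 : 8 ≤ x) (h : x / 8 = y / 8) (hp : x % 2 = y % 2) :
    col x = col y := by
  have key : ∀ z, 8 ≤ z → Nat.log 2 z = Nat.log 2 (z / 8) + 3 := by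
    intro z hz
    have e : z / 8 = z / 2 / 2 / 2 := by omega
    rw [e, Nat.log_of_one_lt_of_le (by norm_num) (show 2 ≤ z by omega),
      Nat.log_of_one_lt_of_le (by norm_num) (show 2 ≤ z / 2 by omega),
      Nat.log_of_one_lt_of_le (by norm_num) (show 2 ≤ z / 2 / 2 by omega)]
  unfold col
  rw [hp, key x h8, key y (by omega), h]

lemma three_le_log {x : ℕ} (h8 : 8 ≤ x) : 3 ≤ Nat.log 2 x :=
  Nat.le_log_of_pow_le (by norm_num) (by omega)

lemma col_ne_of_parity_ne {x y : ℕ} (hx : x = 0 ∨ 8 ≤ x) (hy : y = 0 ∨ 8 ≤ y)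
    (hp : x % 2 ≠ y % 2) : col x ≠ col y := by
  have aux : ∀ z, (z = 0 ∨ 8 ≤ z) → Nat.log 2 z ≠ 1 := by
    rintro z (rfl | hz)
    · simp
    · have := three_le_log hz
      omega
  unfold col
  split_ifs with h1 h2 h2
  · omega
  · exact (aux y hy).symm
  · exact aux x hx
  · omega

lemma col_zero_ne {y : ℕ} (hy : 8 ≤ y) : col 0 ≠ col y := by
  have := three_le_log hy
  unfold col
  rw [Nat.log_zero_right, if_neg (by omega)]
  split_ifs <;> omega

/-- Exactly two of `a`, `b`, `c` coincide. -/
def TwoOf (a b c : ℕ) : Prop := (a = b ∧ c ≠ a) ∨ (a = c ∧ b ≠ a) ∨ (b = c ∧ a ≠ b)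

lemma log_xor_lt {x y : ℕ} (hx : x ≠ 0) (hy : y ≠ 0) (hxy : x ≠ y) (h : Nat.log 2 x = Nat.log 2 y) :
    Nat.log 2 (x ^^^ y) < Nat.log 2 x := by
  have one : ∀ z, z ≠ 0 → z / 2 ^ Nat.log 2 z = 1 := by
    intro z hz
    have h1 := Nat.pow_log_le_self 2 hz
    have h2 := Nat.lt_pow_succ_log_self (b := 2) (by norm_num) z
    rw [pow_succ] at h2
    exact Nat.div_eq_of_lt_le (by omega) (by omega)
  have h0 : x ^^^ y ≠ 0 := by rwa [Ne, Nat.xor_eq_zero_iff]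
  apply Nat.log_lt_of_lt_pow h0
  have e : (x ^^^ y) / 2 ^ Nat.log 2 x = x / 2 ^ Nat.log 2 x ^^^ y / 2 ^ Nat.log 2 x :=
    Nat.xor_div_two_pow
  rw [one x hx, h, one y hy, Nat.xor_self] at e
  rw [h]
  exact (Nat.div_eq_zero_iff_lt (by positivity)).1 e

lemma log_xor_of_lt {x y : ℕ} (h : Nat.log 2 x < Nat.log 2 y) :
    Nat.log 2 (x ^^^ y) = Nat.log 2 y := by
  have hy : y ≠ 0 := by rintro rfl; simp at h
  have hx' : x < 2 ^ Nat.log 2 y := Nat.lt_pow_of_log_lt (by norm_num) h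
  have hy' := Nat.lt_pow_succ_log_self (b := 2) (by norm_num) y
  have hle := Nat.pow_log_le_self 2 hy
  refine Nat.log_eq_of_pow_le_of_lt_pow ?_ ?_
  · by_contra hlt
    have := Nat.xor_lt_two_pow hx' (not_le.1 hlt)
    rw [xor_xor_left] at this
    omega
  · refine Nat.xor_lt_two_pow (hx'.trans_le (Nat.pow_le_pow_right (by norm_num) (by omega))) hy'

lemma xor_mod_two (x y : ℕ) : (x ^^^ y) % 2 = (x + y) % 2 := by
  have h : (x ^^^ y) % 2 = (x % 2) ^^^ (y % 2) := Nat.xor_mod_two_pow (n := 1)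
  rcases Nat.mod_two_eq_zero_or_one x with hx | hx <;>
    rcases Nat.mod_two_eq_zero_or_one y with hy | hy <;>
    rw [h, Nat.add_mod, hx, hy] <;> rfl

lemma twoOf_xor {x y : ℕ} (hx : 8 ≤ x) (hy : 8 ≤ y) (h : x / 8 ≠ y / 8) :
    TwoOf (col x) (col y) (col (x ^^^ y)) := by
  have h8 := eight_le_xor h
  have hm := xor_mod_two x y
  have odd : ∀ z, z % 2 = 1 → col z = 1 := fun z hz => if_pos hz
  have even : ∀ z, z % 2 = 0 → col z = Nat.log 2 z := fun z hz => if_neg (by omega)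
  rcases Nat.mod_two_eq_zero_or_one x with px | px <;>
    rcases Nat.mod_two_eq_zero_or_one y with py | py
  · rw [even x px, even y py, even _ (by omega)]
    rcases lt_trichotomy (Nat.log 2 x) (Nat.log 2 y) with hl | hl | hl
    · have := log_xor_of_lt hl
      unfold TwoOf; omega
    · have := log_xor_lt (by omega) (by omega) (by rintro rfl; exact h rfl) hl
      unfold TwoOf; omega
    · have := log_xor_of_lt hl
      rw [Nat.xor_comm] at this
      unfold TwoOf; omega
  · refine Or.inr (Or.inr ⟨?_, col_ne_of_parity_ne (Or.inr hx) (Or.inr hy) (by omega)⟩)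
    rw [odd y py, odd _ (by omega)]
  · refine Or.inr (Or.inl ⟨?_, col_ne_of_parity_ne (Or.inr hy) (Or.inr hx) (by omega)⟩)
    rw [odd x px, odd _ (by omega)]
  · exact Or.inl ⟨by rw [odd x px, odd y py],
      col_ne_of_parity_ne (Or.inr h8) (Or.inr hx) (by omega)⟩

lemma twoOf_third {n x y : ℕ} (hx : x ∈ points n) (hy : y ∈ points n) (hxy : x ≠ y) :
    TwoOf (col x) (col y) (col (third x y)) := by
  rw [mem_points] at hx hy
  unfold third
  split_ifs with h1 h2 h3 h4
  · subst h1
    exact Or.inr (Or.inr ⟨col_eq_of_div_eq (by omega) (by omega) (by omega),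
      col_zero_ne (by omega)⟩)
  · subst h2
    exact Or.inr (Or.inl ⟨col_eq_of_div_eq (by omega) (by omega) (by omega),
      col_zero_ne (by omega)⟩)
  · exact Or.inl ⟨col_eq_of_div_eq (by omega) h3 (by omega), col_zero_ne (by omega)⟩
  · obtain ⟨r1, -, -, -, -, r6⟩ := resThird_spec (x % 8) (Nat.mod_lt _ (by norm_num)) (y % 8)
      (Nat.mod_lt _ (by norm_num)) (by omega) h4
    generalize resThird (x % 8) (y % 8) = r at *
    have r6' : ¬ (x % 2 = y % 2 ∧ r % 2 = x % 2) := by omega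
    clear r6 h4
    by_cases p : x % 2 = y % 2
    · exact Or.inl ⟨col_eq_of_div_eq (by omega) h3 p,
        col_ne_of_parity_ne (by omega) (by omega) (by omega)⟩
    by_cases q : r % 2 = x % 2
    · exact Or.inr (Or.inl ⟨col_eq_of_div_eq (by omega) (by omega) (by omega),
        col_ne_of_parity_ne (by omega) (by omega) (by omega)⟩)
    · exact Or.inr (Or.inr ⟨col_eq_of_div_eq (by omega) (by omega) (by omega),
        col_ne_of_parity_ne (by omega) (by omega) (by omega)⟩)
  · exact twoOf_xor (by omega) (by omega) h3

lemma card_image_col {x y z : ℕ} (h : TwoOf (col x) (col y) (col z)) :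
    (({x, y, z} : Finset ℕ).image col).card = 2 := by
  rw [Finset.card_eq_two]
  simp only [Finset.image_insert, Finset.image_singleton]
  rcases h with ⟨h, h'⟩ | ⟨h, h'⟩ | ⟨h, h'⟩
  · exact ⟨col x, col z, h'.symm, by rw [← h]; simp⟩
  · exact ⟨col x, col y, h'.symm, by rw [← h]; ext; simp; tauto⟩
  · exact ⟨col x, col y, h', by rw [← h]; simp⟩

/-- The colours used are `0`, `1` and `3, …, n - 1`. -/
lemma image_col (n : ℕ) (hn : 5 ≤ n) :
    (points n).image col = insert 0 (insert 1 (Finset.Ico 3 n)) := by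
  have h32 : 2 ^ 5 ≤ 2 ^ n := Nat.pow_le_pow_right (by norm_num) hn
  ext k
  simp only [Finset.mem_image, Finset.mem_insert, Finset.mem_Ico, mem_points]
  constructor
  · rintro ⟨x, rfl | ⟨h8, hlt⟩, rfl⟩
    · left; simp [col]
    · have h3 := three_le_log h8
      have := Nat.log_lt_of_lt_pow (by omega) hlt
      unfold col
      split_ifs <;> omega
  · rintro (rfl | rfl | ⟨h3, hk⟩)
    · exact ⟨0, Or.inl rfl, by simp [col]⟩
    · exact ⟨9, Or.inr (by omega), by simp [col]⟩
    · have h8 : 2 ^ 3 ≤ 2 ^ k := Nat.pow_le_pow_right (by norm_num) h3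
      refine ⟨2 ^ k, Or.inr ⟨h8, Nat.pow_lt_pow_right (by norm_num) hk⟩, ?_⟩
      have : 2 ^ k % 2 = 0 := Nat.mod_eq_zero_of_dvd (dvd_pow_self 2 (by omega))
      unfold col
      rw [if_neg (by omega), Nat.log_pow (by norm_num)]

lemma col_eq_one {n x : ℕ} (hx : x ∈ points n) : col x = 1 ↔ x % 2 = 1 := by
  rw [mem_points] at hx
  refine ⟨fun h => ?_, fun h => if_pos h⟩
  by_contra hp
  have h9 : col 9 = 1 := by simp [col]
  exact col_ne_of_parity_ne (x := x) (y := 9) (by omega) (by omega) (by omega) (h.trans h9.symm)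

/-- For every `n ≥ 5` there exists an STS of order `v = 2^n - 7` with a bicoloring with
exactly `n - 1` color classes, one class being a maximal independent set of
cardinality `(v-1)/2`. -/
theorem exists_sts_bicolorable_with_max_indep_class (n : ℕ) (hn : 5 ≤ n) :
    ∃ (X : Finset ℕ) (B : Finset (Finset ℕ)) (C : Finset (Finset ℕ)) (T : Finset ℕ),
      IsSTS X B ∧ X.card = 2 ^ n - 7 ∧ IsBicoloring X B C (n - 1) ∧
      T ∈ C ∧ IsMaxIndepSet X B T ∧ T.card = (2 ^ n - 7 - 1) / 2 := by
  have h32 : 2 ^ 5 ≤ 2 ^ n := Nat.pow_le_pow_right (by norm_num) hn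
  have hsts : IsSTS (points n) (triples (points n) third) :=
    isSTS_of_third _ _ (fun x hx y hy h => third_mem hn hx hy h)
      (fun _ _ _ hy h => third_ne hy h) (fun _ _ _ _ h => third_comm h)
      (fun _ _ _ hy h => third_third hy h)
  have htwo : ∀ b ∈ triples (points n) third, (b.image col).card = 2 := by
    intro b hb
    obtain ⟨x, hx, y, hy, hxy, rfl⟩ := mem_triples.1 hb
    exact card_image_col (twoOf_third hx hy hxy)
  have hT : ∀ x, x ∈ ((points n).filter fun x => col x = 1) ↔ x ∈ points n ∧ x % 2 = 1 := by
    intro x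
    rw [Finset.mem_filter]
    exact and_congr_right fun h => col_eq_one h
  refine ⟨points n, triples (points n) third, classes (points n) col,
    (points n).filter fun x => col x = 1, hsts, ?_, ?_, ?_, ⟨⟨?_, ?_⟩, ?_⟩, ?_⟩
  · rw [points, Finset.card_insert_of_notMem (by simp), Nat.card_Ico]
    omega
  · refine isBicoloring_of_col _ _ _ _ ?_ (fun b hb => (hsts.1 b hb).1) htwo
    rw [image_col n hn, Finset.card_insert_of_notMem (by simp),
      Finset.card_insert_of_notMem (by simp), Nat.card_Ico]
    omega
  · refine Finset.mem_image_of_mem _ ?_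
    rw [image_col n hn]
    simp
  · exact Finset.filter_subset _ _
  · -- A block inside one class would meet only one colour.
    intro b hb hsub
    have h1 : b.image col ⊆ {1} := by
      intro k hk
      obtain ⟨x, hx, rfl⟩ := Finset.mem_image.1 hk
      simpa using (Finset.mem_filter.1 (hsub hx)).2
    have := Finset.card_le_card h1
    rw [htwo b hb] at this
    simp at this
  · rintro T' ⟨hT'X, hT'⟩ hsub
    refine (Finset.Subset.antisymm hsub fun s hs => ?_).symm
    rw [hT]
    refine ⟨hT'X hs, ?_⟩
    by_contra hp
    have hsX := hT'X hs
    -- An even point `s` lies in a block with two odd points `t` and `third s t`.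
    obtain ⟨t, ht, htp, hodd⟩ : ∃ t ∈ points n, t % 2 = 1 ∧ third s t % 2 = 1 := by
      by_cases h0 : s = 0
      · exact ⟨9, mem_points.2 (by omega), rfl, by subst h0; decide⟩
      -- One of `9` and `17` lies outside the group of `s`.
      obtain ⟨t, ht, htp, hd⟩ : ∃ t, (8 ≤ t ∧ t < 32) ∧ t % 2 = 1 ∧ ¬ s / 8 = t / 8 := by
        by_cases h : s / 8 = 1
        · exact ⟨17, by omega, rfl, by omega⟩
        · exact ⟨9, by omega, rfl, by omega⟩
      refine ⟨t, mem_points.2 (by omega), htp, ?_⟩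
      rw [third, if_neg h0, if_neg (by omega), if_neg hd, xor_mod_two]
      omega
    have hst : s ≠ t := by rintro rfl; exact hp htp
    refine hT' _ (mem_triples.2 ⟨s, hsX, t, ht, hst, rfl⟩) fun z hz => ?_
    simp only [Finset.mem_insert, Finset.mem_singleton] at hz
    rcases hz with rfl | rfl | rfl
    · exact hs
    · exact hsub ((hT _).2 ⟨ht, htp⟩)
    · exact hsub ((hT _).2 ⟨third_mem hn hsX ht hst, hodd⟩)
  · have e : ((points n).filter fun x => col x = 1) =
        (Finset.range ((2 ^ n - 7 - 1) / 2)).image fun i => 2 * i + 9 := by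
      have hev : 2 ^ n % 2 = 0 := Nat.mod_eq_zero_of_dvd (dvd_pow_self 2 (by omega))
      ext x
      rw [hT, mem_points, Finset.mem_image]
      constructor
      · rintro ⟨h, hp⟩
        exact ⟨(x - 9) / 2, by rw [Finset.mem_range]; omega, by omega⟩
      · rintro ⟨i, hi, rfl⟩
        rw [Finset.mem_range] at hi
        omega
    rw [e, Finset.card_image_of_injective _ (fun i j (h : 2 * i + 9 = 2 * j + 9) => by omega),
      Finset.card_range]
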